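/- Let a ≥ 1 and n ≥ 3a + 6 be integers. Then ρ(G_2(a, n−2a−6, a−1)) > ρ(G_2(a, n−2a−7, a)). -/

import Mathlib

open SimpleGraph

/-- Adjacency matrix of a simple graph over ℝ. -/
noncomputable def adjMat {V : Type*} (G : SimpleGraph V) : Matrix V V ℝ :=
  Matrix.of fun i j => @ite ℝ (G.Adj i j) (Classical.propDecidable _) 1 0

/-- Spectral radius: the largest eigenvalue (supremum of the real spectrum)
of the adjacency matrix. -/
noncomputable def specRad {V : Type*} [Fintype V] [DecidableEq V]
    (G : SimpleGraph V) : ℝ :=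
  sSup (spectrum ℝ (adjMat G))

/-- `D` is a dominating set of `G`. -/
def IsDomSet {V : Type*} (G : SimpleGraph V) (D : Finset V) : Prop :=
  ∀ v ∉ D, ∃ u ∈ D, G.Adj u v

/-- The domination number of `G`. -/
noncomputable def domNum {V : Type*} [Fintype V] (G : SimpleGraph V) : ℕ :=
  sInf {k | ∃ D : Finset V, IsDomSet G D ∧ D.card = k}

/-- The tree `G₂(a,b,c)`: the path v1 v4 v5 v2 v6 v7 v3 (vertices `Sum.inl 0, …, Sum.inl 6`
in path order), with `a` pendant edges at v1, `b` pendant edges at v2 and `c` pendant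
edges at v3. -/
def G2graph (a b c : ℕ) : SimpleGraph (Fin 7 ⊕ (Fin a ⊕ Fin b ⊕ Fin c)) :=
  SimpleGraph.fromRel (fun x y =>
    (x = Sum.inl 0 ∧ y = Sum.inl 1) ∨
    (x = Sum.inl 1 ∧ y = Sum.inl 2) ∨
    (x = Sum.inl 2 ∧ y = Sum.inl 3) ∨
    (x = Sum.inl 3 ∧ y = Sum.inl 4) ∨
    (x = Sum.inl 4 ∧ y = Sum.inl 5) ∨
    (x = Sum.inl 5 ∧ y = Sum.inl 6) ∨
    (∃ j : Fin a, x = Sum.inl 0 ∧ y = Sum.inr (Sum.inl j)) ∨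
    (∃ j : Fin b, x = Sum.inl 3 ∧ y = Sum.inr (Sum.inr (Sum.inl j))) ∨
    (∃ j : Fin c, x = Sum.inl 6 ∧ y = Sum.inr (Sum.inr (Sum.inr j))))


/-!
Let `x` be the Perron vector of `G₂(a, b, c + 1)`, where `c ≤ b`. The eigenvalue equations on the
arm `v2 v6 v7 v3` and on its pendant vertices force `x v3 < x v2`. Now move one pendant edge from
`v3` to `v2`, obtaining `G₂(a, b + 1, c)`: since `x v3 ≤ x v2`, the Rayleigh quotient of `x` does
not decrease. The spectral radius strictly increases, for otherwise `x` would be an eigenvector of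
both trees with the same eigenvalue, which fails at `v2` as `v2` has gained a neighbour.
-/

section RealSymmetricMatrix

open Matrix

variable {n : Type*} [Fintype n] {A : Matrix n n ℝ}

lemma posSemidef_algebraMap_sub [DecidableEq n] (hA : A.IsHermitian) {t : ℝ}
    (ht : t ∈ upperBounds (spectrum ℝ A)) : (algebraMap ℝ (Matrix n n ℝ) t - A).PosSemidef := by
  refine posSemidef_iff_isHermitian_and_spectrum_nonneg.2 ⟨?_, ?_⟩
  · exact IsHermitian.sub ((IsSelfAdjoint.all t).algebraMap _) hA
  · rw [← spectrum.singleton_sub_eq]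
    rintro _ ⟨_, rfl, μ, hμ, rfl⟩
    exact sub_nonneg.2 (ht hμ)

lemma mulVec_eq_smul_of_mem_upperBounds_spectrum [DecidableEq n] (hA : A.IsHermitian) {t : ℝ}
    (ht : t ∈ upperBounds (spectrum ℝ A)) {x : n → ℝ} (hx : t * (x ⬝ᵥ x) ≤ x ⬝ᵥ A *ᵥ x) :
    A *ᵥ x = t • x := by
  have hpsd := posSemidef_algebraMap_sub hA ht
  have hsub : (algebraMap ℝ (Matrix n n ℝ) t - A) *ᵥ x = t • x - A *ᵥ x := by
    rw [sub_mulVec, Algebra.algebraMap_eq_smul_one, smul_mulVec, one_mulVec]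
  have hzero : star x ⬝ᵥ (algebraMap ℝ (Matrix n n ℝ) t - A) *ᵥ x = 0 := by
    refine le_antisymm ?_ (hpsd.dotProduct_mulVec_nonneg x)
    rwa [hsub, star_trivial, dotProduct_sub, dotProduct_smul, smul_eq_mul, sub_nonpos]
  rw [hpsd.dotProduct_mulVec_zero_iff, hsub, sub_eq_zero] at hzero
  exact hzero.symm

lemma dotProduct_mulVec_le_abs (hA : ∀ i j, 0 ≤ A i j) (x : n → ℝ) :
    x ⬝ᵥ A *ᵥ x ≤ |x| ⬝ᵥ A *ᵥ |x| := by
  simp only [dotProduct, mulVec, Finset.mul_sum, Pi.abs_apply]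
  refine Finset.sum_le_sum fun i _ ↦ Finset.sum_le_sum fun j _ ↦ ?_
  calc x i * (A i j * x j) ≤ |x i * (A i j * x j)| := le_abs_self _
    _ = |x i| * (A i j * |x j|) := by rw [abs_mul, abs_mul, abs_of_nonneg (hA i j)]

lemma sSup_spectrum_mem_spectrum [DecidableEq n] [Nonempty n] (hA : A.IsHermitian) :
    sSup (spectrum ℝ A) ∈ spectrum ℝ A := by
  refine Set.Nonempty.csSup_mem ?_ finite_real_spectrum
  rw [hA.spectrum_real_eq_range_eigenvalues]
  exact Set.range_nonempty _

lemma exists_nonneg_mulVec_eq_sSup_spectrum_smul [DecidableEq n] [Nonempty n]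
    (hA : A.IsHermitian) (hA₀ : ∀ i j, 0 ≤ A i j) :
    ∃ x : n → ℝ, 0 ≤ x ∧ x ≠ 0 ∧ A *ᵥ x = sSup (spectrum ℝ A) • x := by
  have heig : Module.End.HasEigenvalue (toLin' A) (sSup (spectrum ℝ A)) := by
    rw [Module.End.hasEigenvalue_iff_mem_spectrum, spectrum_toLin']
    exact sSup_spectrum_mem_spectrum hA
  obtain ⟨x, hx⟩ := heig.exists_hasEigenvector
  have hAx : A *ᵥ x = sSup (spectrum ℝ A) • x := by
    rw [← toLin'_apply, hx.apply_eq_smul]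
  refine ⟨|x|, abs_nonneg x, fun h ↦ hx.2 (funext fun i ↦ abs_eq_zero.1 (congrFun h i)), ?_⟩
  refine mulVec_eq_smul_of_mem_upperBounds_spectrum hA
    (fun μ hμ ↦ le_csSup finite_real_spectrum.bddAbove hμ) ?_
  calc sSup (spectrum ℝ A) * (|x| ⬝ᵥ |x|) = x ⬝ᵥ A *ᵥ x := by
        rw [hAx, dotProduct_smul, smul_eq_mul]
        simp only [dotProduct, Pi.abs_apply, abs_mul_abs_self]
    _ ≤ |x| ⬝ᵥ A *ᵥ |x| := dotProduct_mulVec_le_abs hA₀ x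

end RealSymmetricMatrix

section SpectralRadius

open Matrix

variable {V W : Type*} {G : SimpleGraph V} {H : SimpleGraph W}

lemma adjMat_apply (G : SimpleGraph V) [DecidableRel G.Adj] (v w : V) :
    adjMat G v w = if G.Adj v w then 1 else 0 := by
  simp only [adjMat, of_apply]
  congr

lemma adjMat_nonneg (G : SimpleGraph V) (v w : V) : 0 ≤ adjMat G v w := by
  classical
  rw [adjMat_apply]
  positivity

lemma isHermitian_adjMat (G : SimpleGraph V) : (adjMat G).IsHermitian := by
  classical
  ext v w
  simp only [conjTranspose_apply, star_trivial, adjMat_apply, G.adj_comm]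

lemma adjMat_mulVec_apply [Fintype V] (G : SimpleGraph V) [DecidableRel G.Adj] (x : V → ℝ)
    (v : V) : (adjMat G *ᵥ x) v = ∑ w, if G.Adj v w then x w else 0 := by
  simp only [mulVec, dotProduct, adjMat_apply, ite_mul, one_mul, zero_mul]

lemma specRad_congr [Fintype V] [DecidableEq V] [Fintype W] [DecidableEq W] (e : G ≃g H) :
    specRad G = specRad H := by
  classical
  have hreindex : reindexAlgEquiv ℝ ℝ e.toEquiv (adjMat G) = adjMat H := by
    ext v w
    change adjMat G (e.symm v) (e.symm w) = adjMat H v w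
    rw [adjMat_apply, adjMat_apply]
    exact if_congr e.symm.map_adj_iff rfl rfl
  rw [specRad, specRad, ← hreindex, AlgEquiv.spectrum_eq]

lemma pos_of_adjMat_mulVec_eq_smul [Fintype V] (hG : G.Connected) {x : V → ℝ} {t : ℝ}
    (hx₀ : 0 ≤ x) (hx : x ≠ 0) (hGx : adjMat G *ᵥ x = t • x) (v : V) : 0 < x v := by
  classical
  have eq_zero_of_adj {u w : V} (huw : G.Adj u w) (hu : x u = 0) : x w = 0 := by
    have hsum : ∑ w, (if G.Adj u w then x w else 0) = 0 := by
      rw [← adjMat_mulVec_apply, hGx, Pi.smul_apply, hu, smul_zero]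
    rw [Finset.sum_eq_zero_iff_of_nonneg fun w _ ↦ ite_nonneg (hx₀ w) le_rfl] at hsum
    simpa [huw] using hsum w (Finset.mem_univ w)
  refine (hx₀ v).lt_of_ne' fun hv ↦ hx (funext fun w ↦ ?_)
  obtain ⟨p⟩ := hG.preconnected v w
  induction p with
  | nil => exact hv
  | cons huw _ ih => exact ih (eq_zero_of_adj huw hv)

lemma exists_pos_adjMat_mulVec_eq_specRad_smul [Fintype V] [DecidableEq V] (hG : G.Connected) :
    ∃ x : V → ℝ, (∀ v, 0 < x v) ∧ adjMat G *ᵥ x = specRad G • x := by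
  have := hG.nonempty
  obtain ⟨x, hx₀, hx, hGx⟩ :=
    exists_nonneg_mulVec_eq_sSup_spectrum_smul (isHermitian_adjMat G) (adjMat_nonneg G)
  exact ⟨x, pos_of_adjMat_mulVec_eq_smul hG hx₀ hx hGx, hGx⟩

lemma adjMat_mulVec_eq_smul_of_specRad_le [Fintype V] [DecidableEq V] {t : ℝ}
    (ht : specRad G ≤ t) {x : V → ℝ} (hx : t * (x ⬝ᵥ x) ≤ x ⬝ᵥ adjMat G *ᵥ x) :
    adjMat G *ᵥ x = t • x :=
  mulVec_eq_smul_of_mem_upperBounds_spectrum (isHermitian_adjMat G)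
    (fun _ hμ ↦ (le_csSup finite_real_spectrum.bddAbove hμ).trans ht) hx

section EdgeShift

variable [DecidableEq V] {u v w : V} {x : V → ℝ}

lemma adjMat_sup_edge (huw : u ≠ w) (hG : ¬G.Adj u w) :
    adjMat (G ⊔ edge u w) = adjMat G + (single u w 1 + single w u 1) := by
  classical
  ext i j
  simp only [adjMat_apply, Matrix.add_apply, single_apply, sup_adj, edge_adj]
  grind [G.adj_comm]

variable [Fintype V]

lemma adjMat_sup_edge_mulVec (huw : u ≠ w) (hG : ¬G.Adj u w) (x : V → ℝ) :
    adjMat (G ⊔ edge u w) *ᵥ x = adjMat G *ᵥ x + (Pi.single u (x w) + Pi.single w (x u)) := by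
  simp only [adjMat_sup_edge huw hG, add_mulVec, single_mulVec, one_mul, Pi.single]

lemma specRad_sup_edge_lt_specRad_sup_edge (huv : u ≠ v) (huw : u ≠ w) (hvw : v ≠ w)
    (hGu : ¬G.Adj u w) (hGv : ¬G.Adj v w)
    (hx : adjMat (G ⊔ edge v w) *ᵥ x = specRad (G ⊔ edge v w) • x)
    (hxw : 0 < x w) (hxuv : x v ≤ x u) :
    specRad (G ⊔ edge v w) < specRad (G ⊔ edge u w) := by
  by_contra! hle
  have hrayleigh : specRad (G ⊔ edge v w) * (x ⬝ᵥ x) ≤ x ⬝ᵥ adjMat (G ⊔ edge u w) *ᵥ x := by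
    calc specRad (G ⊔ edge v w) * (x ⬝ᵥ x)
        = x ⬝ᵥ adjMat (G ⊔ edge v w) *ᵥ x := by rw [hx, dotProduct_smul, smul_eq_mul]
      _ = x ⬝ᵥ adjMat G *ᵥ x + 2 * (x v * x w) := by
        simp only [adjMat_sup_edge_mulVec hvw hGv, dotProduct_add, dotProduct_single]; ring
      _ ≤ x ⬝ᵥ adjMat G *ᵥ x + 2 * (x u * x w) := by gcongr
      _ = x ⬝ᵥ adjMat (G ⊔ edge u w) *ᵥ x := by
        simp only [adjMat_sup_edge_mulVec huw hGu, dotProduct_add, dotProduct_single]; ring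
  have hsame : adjMat (G ⊔ edge u w) *ᵥ x = adjMat (G ⊔ edge v w) *ᵥ x :=
    (adjMat_mulVec_eq_smul_of_specRad_le hle hrayleigh).trans hx.symm
  have hu := congrFun hsame u
  simp [adjMat_sup_edge_mulVec huw hGu, adjMat_sup_edge_mulVec hvw hGv, huv, huw, hxw.ne'] at hu

lemma specRad_lt_specRad_sdiff_edge_sup_edge (huv : u ≠ v) (huw : u ≠ w) (hGu : ¬G.Adj u w)
    (hGv : G.Adj v w) (hx : adjMat G *ᵥ x = specRad G • x) (hxw : 0 < x w) (hxuv : x v ≤ x u) :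
    specRad G < specRad (G \ edge v w ⊔ edge u w) := by
  have hdel : G \ edge v w ⊔ edge v w = G :=
    sdiff_sup_cancel ((edge_le _ _ _).2
      (Set.sdiff_subset.trans (Set.singleton_subset_iff.2 hGv)))
  rw [← hdel] at hx
  have hlt := specRad_sup_edge_lt_specRad_sup_edge huv huw hGv.ne (by simp [hGu])
    (by simp [edge_adj, hGv.ne]) hx hxw hxuv
  rwa [hdel] at hlt

end EdgeShift

end SpectralRadius

namespace G2graph

open Matrix

variable (a b c : ℕ)

lemma connected : (G2graph a b c).Connected := by
  have hpath (i : Fin 7) : (G2graph a b c).Reachable (.inl 0) (.inl i) := by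
    induction i using Fin.induction with
    | zero => rfl
    | succ i ih =>
      refine ih.trans (Adj.reachable ?_)
      fin_cases i <;> simp [G2graph]
  refine (connected_iff_exists_forall_reachable _).2 ⟨.inl 0, ?_⟩
  rintro (i | j | j | j)
  · exact hpath i
  · exact (hpath 0).trans (Adj.reachable (by simp [G2graph]))
  · exact (hpath 3).trans (Adj.reachable (by simp [G2graph]))
  · exact (hpath 6).trans (Adj.reachable (by simp [G2graph]))

section Eigenvector

variable {a b c} (x : Fin 7 ⊕ (Fin a ⊕ Fin b ⊕ Fin c) → ℝ)

lemma mulVec_inl_two :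
    (adjMat (G2graph a b c) *ᵥ x) (.inl 2) = x (.inl 1) + x (.inl 3) := by
  classical
  simp [adjMat_mulVec_apply, G2graph, Fin.sum_univ_seven]

lemma mulVec_inl_three :
    (adjMat (G2graph a b c) *ᵥ x) (.inl 3) =
      x (.inl 2) + x (.inl 4) + ∑ j, x (.inr (.inr (.inl j))) := by
  classical
  simp [adjMat_mulVec_apply, G2graph, Fin.sum_univ_seven]

lemma mulVec_inl_four :
    (adjMat (G2graph a b c) *ᵥ x) (.inl 4) = x (.inl 3) + x (.inl 5) := by
  classical
  simp [adjMat_mulVec_apply, G2graph, Fin.sum_univ_seven]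

lemma mulVec_inl_five :
    (adjMat (G2graph a b c) *ᵥ x) (.inl 5) = x (.inl 4) + x (.inl 6) := by
  classical
  simp [adjMat_mulVec_apply, G2graph, Fin.sum_univ_seven]

lemma mulVec_inl_six :
    (adjMat (G2graph a b c) *ᵥ x) (.inl 6) = x (.inl 5) + ∑ j, x (.inr (.inr (.inr j))) := by
  classical
  simp [adjMat_mulVec_apply, G2graph, Fin.sum_univ_seven]

lemma mulVec_inr_inr_inl (j : Fin b) :
    (adjMat (G2graph a b c) *ᵥ x) (.inr (.inr (.inl j))) = x (.inl 3) := by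
  classical
  simp [adjMat_mulVec_apply, G2graph]

lemma mulVec_inr_inr_inr (j : Fin c) :
    (adjMat (G2graph a b c) *ᵥ x) (.inr (.inr (.inr j))) = x (.inl 6) := by
  classical
  simp [adjMat_mulVec_apply, G2graph]

variable {x} {t : ℝ}

lemma sq_mul_apply_inl_three (hx : adjMat (G2graph a b c) *ᵥ x = t • x) :
    t ^ 2 * x (.inl 3) = t * (x (.inl 2) + x (.inl 4)) + b * x (.inl 3) := by
  have heig (v) : t * x v = (adjMat (G2graph a b c) *ᵥ x) v := (congrFun hx v).symm
  rw [pow_two, mul_assoc, heig, mulVec_inl_three, mul_add, Finset.mul_sum]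
  simp [heig, mulVec_inr_inr_inl]

lemma sq_mul_apply_inl_six (hx : adjMat (G2graph a b c) *ᵥ x = t • x) :
    t ^ 2 * x (.inl 6) = t * x (.inl 5) + c * x (.inl 6) := by
  have heig (v) : t * x v = (adjMat (G2graph a b c) *ᵥ x) v := (congrFun hx v).symm
  rw [pow_two, mul_assoc, heig, mulVec_inl_six, mul_add, Finset.mul_sum]
  simp [heig, mulVec_inr_inr_inr]

lemma eigenvalue_pos (hpos : ∀ v, 0 < x v) (hx : adjMat (G2graph a b c) *ᵥ x = t • x) :
    0 < t := by
  have h₄ : t * x (.inl 4) = x (.inl 3) + x (.inl 5) :=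
    (congrFun hx _).symm.trans (mulVec_inl_four x)
  exact pos_of_mul_pos_left (h₄ ▸ add_pos (hpos _) (hpos _)) (hpos _).le

lemma apply_inl_five_mul_apply_inl_three_le (hpos : ∀ v, 0 < x v)
    (hx : adjMat (G2graph a b c) *ᵥ x = t • x) (hle : x (.inl 3) ≤ x (.inl 6)) :
    x (.inl 5) * x (.inl 3) ≤ x (.inl 4) * x (.inl 6) := by
  have ht := eigenvalue_pos hpos hx
  have h₄ : t * x (.inl 4) = x (.inl 3) + x (.inl 5) :=
    (congrFun hx _).symm.trans (mulVec_inl_four x)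
  have h₅ : t * x (.inl 5) = x (.inl 4) + x (.inl 6) :=
    (congrFun hx _).symm.trans (mulVec_inl_five x)
  have h₄₅ : x (.inl 4) ≤ x (.inl 5) := by
    have hdiff : (t + 1) * (x (.inl 5) - x (.inl 4)) = x (.inl 6) - x (.inl 3) := by
      linear_combination h₅ - h₄
    exact sub_nonneg.1 (nonneg_of_mul_nonneg_right (hdiff ▸ sub_nonneg.2 hle) (by positivity))
  have hdiff : t * (x (.inl 4) * x (.inl 6) - x (.inl 5) * x (.inl 3)) =
      x (.inl 5) * x (.inl 6) - x (.inl 4) * x (.inl 3) := by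
    linear_combination x (.inl 6) * h₄ - x (.inl 3) * h₅
  have hmul := mul_le_mul h₄₅ hle (hpos _).le (hpos _).le
  exact sub_nonneg.1 (nonneg_of_mul_nonneg_right (hdiff ▸ sub_nonneg.2 hmul) ht)

-- If `x v2 ≤ x v3`, then relative to the entry of its hub the arm contributes at least as much at
-- `v2` as at `v3`, and the other arm at `v2` outweighs the one pendant vertex that `v3` may have in
-- excess.
lemma apply_inl_six_lt_apply_inl_three (hcb : c ≤ b + 1) (hpos : ∀ v, 0 < x v)
    (hx : adjMat (G2graph a b c) *ᵥ x = t • x) : x (.inl 6) < x (.inl 3) := by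
  by_contra! hle
  have ht := eigenvalue_pos hpos hx
  have hx₃ := hpos (.inl 3)
  have hx₆ := hpos (.inl 6)
  have hcb' : (c : ℝ) ≤ b + 1 := by exact_mod_cast hcb
  have harm := apply_inl_five_mul_apply_inl_three_le hpos hx hle
  have hother : x (.inl 3) < t * x (.inl 2) := by
    have h₂ : t * x (.inl 2) = x (.inl 1) + x (.inl 3) :=
      (congrFun hx _).symm.trans (mulVec_inl_two x)
    exact h₂ ▸ lt_add_of_pos_left _ (hpos _)
  refine lt_irrefl (t ^ 2 * x (.inl 6) * x (.inl 3)) ?_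
  calc t ^ 2 * x (.inl 6) * x (.inl 3)
      = t * (x (.inl 5) * x (.inl 3)) + c * (x (.inl 3) * x (.inl 6)) := by
        rw [sq_mul_apply_inl_six hx]; ring
    _ ≤ t * (x (.inl 4) * x (.inl 6)) + (b + 1) * (x (.inl 3) * x (.inl 6)) := by gcongr
    _ = t * (x (.inl 4) * x (.inl 6)) + b * (x (.inl 3) * x (.inl 6)) +
          x (.inl 3) * x (.inl 6) := by ring
    _ < t * (x (.inl 4) * x (.inl 6)) + b * (x (.inl 3) * x (.inl 6)) +
          t * x (.inl 2) * x (.inl 6) := by gcongr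
    _ = t ^ 2 * x (.inl 6) * x (.inl 3) := by
        linear_combination -x (.inl 6) * sq_mul_apply_inl_three hx

end Eigenvector

/-- The bijection between the vertices of `G₂(a, b, c + 1)` and `G₂(a, b + 1, c)` under which the
trees differ by one edge shift: the first of the `c + 1` pendant vertices at `v3` becomes the first
of the `b + 1` pendant vertices at `v2`; all other vertices keep their place. -/
def shiftPendant :
    Fin 7 ⊕ (Fin a ⊕ Fin b ⊕ Fin (c + 1)) ≃ Fin 7 ⊕ (Fin a ⊕ Fin (b + 1) ⊕ Fin c) :=
  .sumCongr (.refl _) <| .sumCongr (.refl _)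
    { toFun := Sum.elim (fun j ↦ .inl j.succ) (Fin.cases (.inl 0) .inr)
      invFun := Sum.elim (Fin.cases (.inr 0) .inl) (fun j ↦ .inr j.succ)
      left_inv := by rintro (j | j) <;> [rfl; cases j using Fin.cases <;> rfl]
      right_inv := by rintro (j | j) <;> [cases j using Fin.cases <;> rfl; rfl] }

/-- The edge shift from `G₂(a, b, c + 1)` to `G₂(a, b + 1, c)`: the edge from `v3` to its first
pendant vertex is replaced by an edge from `v2` to that vertex. -/
def shiftPendantIso :
    (G2graph a b (c + 1) \ edge (.inl 6) (.inr (.inr (.inr 0)))) ⊔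
      edge (.inl 3) (.inr (.inr (.inr 0))) ≃g G2graph a (b + 1) c where
  toEquiv := shiftPendant a b c
  map_rel_iff' := by simp [Fin.forall_fin_succ, shiftPendant, G2graph, edge_adj]

end G2graph

theorem specRad_G2_asymmetric_gt_general (a b c : ℕ) (hcb : c ≤ b) :
    specRad (G2graph a b (c + 1)) < specRad (G2graph a (b + 1) c) := by
  obtain ⟨x, hpos, hx⟩ := exists_pos_adjMat_mulVec_eq_specRad_smul (G2graph.connected a b (c + 1))
  have hlt := G2graph.apply_inl_six_lt_apply_inl_three (by omega) hpos hx
  calc specRad (G2graph a b (c + 1))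
      < specRad (G2graph a b (c + 1) \ edge (.inl 6) (.inr (.inr (.inr 0))) ⊔
          edge (.inl 3) (.inr (.inr (.inr 0)))) :=
        specRad_lt_specRad_sdiff_edge_sup_edge (by simp) (by simp) (by simp [G2graph])
          (by simp [G2graph]) hx (hpos _) hlt.le
    _ = specRad (G2graph a (b + 1) c) := specRad_congr (G2graph.shiftPendantIso a b c)

theorem specRad_G2_asymmetric_gt (a n : ℕ) (ha : 1 ≤ a) (hn : 3 * a + 6 ≤ n) :
    specRad (G2graph a (n - 2 * a - 7) a) <
      specRad (G2graph a (n - 2 * a - 6) (a - 1)) := by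
  have h := specRad_G2_asymmetric_gt_general a (n - 2 * a - 7) (a - 1) (by omega)
  rwa [Nat.sub_add_cancel ha, show n - 2 * a - 7 + 1 = n - 2 * a - 6 by omega] at h
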